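/- Let n ≥ 1 be an integer, θ ∈ (0, π/2], 1 ≤ k ≤ n, A > 0, c₀ > 0 and c₁ > 0. Let (s_i)_{i∈ℕ} be a sequence of smooth capillary functions on C_θ with τ[s_i] > 0, with 1-homogeneous extensions G_i, such that for every i: sup_{u ∈ S^n_θ} (|G_i(u)| + ‖∇G_i(u)‖ + ‖D²G_i(u)‖) ≤ A, ∫_{C_θ} s_i(ζ) ζ_j dσ(ζ) = 0 for all j = 1,…,n, and σ_k(τ[s_i])(ζ) ≥ c₀ for all ζ ∈ C_θ. Set K_i := convexHull(∇G_i(S^n_θ)) and Ω_i := K_i ∩ {x_{n+1} = 0}, and assume that for every i, sup{⟨v, x⟩ : x ∈ Ω_i, v a unit vector with v_{n+1} = 0} ≥ c₁. Then there exists a constant c₂ > 0 such that the (n+1)-dimensional Lebesgue volume satisfies vol(K_i) ≥ c₂ for all i. -/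

import Mathlib

open MeasureTheory Real Set
open scoped RealInnerProductSpace

noncomputable section

abbrev V (n : ℕ) := EuclideanSpace ℝ (Fin (n + 1))

/-- The vertical unit vector `E_{n+1}`. -/
def Etop (n : ℕ) : V n := EuclideanSpace.single (Fin.last n) 1

/-- The spherical cap `S^n_θ`. -/
def sphCap (n : ℕ) (θ : ℝ) : Set (V n) :=
  {u | ‖u‖ = 1 ∧ Real.cos θ ≤ u (Fin.last n)}

/-- The boundary circle `∂S^n_θ`. -/
def sphCapBdry (n : ℕ) (θ : ℝ) : Set (V n) :=
  {u | ‖u‖ = 1 ∧ u (Fin.last n) = Real.cos θ}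

/-- The capillary cap `C_θ`. -/
def capCap (n : ℕ) (θ : ℝ) : Set (V n) :=
  {ζ | 0 ≤ ζ (Fin.last n) ∧ ‖ζ + Real.cos θ • Etop n‖ = 1}

/-- The open cone over `S^n_θ`. -/
def coneCap (n : ℕ) (θ : ℝ) : Set (V n) :=
  {x | ∃ l : ℝ, 0 < l ∧ ∃ u ∈ sphCap n θ, x = l • u}

/-- `G` is a positively 1-homogeneous extension of `g : C_θ → ℝ` which is `C^m` on an
open neighborhood of the cone over `S^n_θ`. -/
def IsHomExt (n : ℕ) (θ : ℝ) (m : ℕ∞) (g G : V n → ℝ) : Prop :=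
  (∃ U : Set (V n), IsOpen U ∧ coneCap n θ ⊆ U ∧ ContDiffOn ℝ m G U) ∧
  (∀ l : ℝ, 0 < l → ∀ u ∈ sphCap n θ, G (l • u) = l * G u) ∧
  (∀ ζ ∈ capCap n θ, G (ζ + Real.cos θ • Etop n) = g ζ)

/-- The Hessian of `G` at `u` as a quadratic/bilinear form. -/
def hessQ (n : ℕ) (G : V n → ℝ) (u v w : V n) : ℝ :=
  fderiv ℝ (fderiv ℝ G) u v w

/-- The Hessian matrix `D²G(u)` in the standard coordinates. -/
def hessM (n : ℕ) (G : V n → ℝ) (u : V n) : Matrix (Fin (n + 1)) (Fin (n + 1)) ℝ :=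
  fun i j => fderiv ℝ (fderiv ℝ G) u (EuclideanSpace.single i 1) (EuclideanSpace.single j 1)

/-- `σ_j` of the eigenvalues of `D²G(u)` (via characteristic polynomial coefficients). -/
def sigmaElem (n : ℕ) (j : ℕ) (G : V n → ℝ) (u : V n) : ℝ :=
  (-1 : ℝ) ^ j * ((hessM n G u).charpoly.coeff (n + 1 - j))

/-- `τ[g] ≥ 0` : the Hessian of the extension is positive semidefinite on `S^n_θ`. -/
def TauNonneg (n : ℕ) (θ : ℝ) (G : V n → ℝ) : Prop :=
  ∀ u ∈ sphCap n θ, ∀ v : V n, 0 ≤ hessQ n G u v v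

/-- `τ[g] > 0`. -/
def TauPos (n : ℕ) (θ : ℝ) (G : V n → ℝ) : Prop :=
  TauNonneg n θ G ∧
  ∀ u ∈ sphCap n θ, ∀ v : V n, v ≠ 0 → ⟪v, u⟫ = 0 → 0 < hessQ n G u v v

/-- Capillary (Robin) boundary condition: `∂_{n+1}G = 0` on `∂S^n_θ`. -/
def IsCapillaryF (n : ℕ) (θ : ℝ) (G : V n → ℝ) : Prop :=
  ∀ u ∈ sphCapBdry n θ, fderiv ℝ G u (Etop n) = 0

/-- Reflection negating the horizontal coordinates. -/
def horizNeg (n : ℕ) (ζ : V n) : V n := (2 * ζ (Fin.last n)) • Etop n - ζ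

/-- Support function of a set. -/
def suppFn (n : ℕ) (K : Set (V n)) (u : V n) : ℝ := sSup ((fun y => ⟪u, y⟫) '' K)

/-- Relative interior (within the hyperplane `{x_{n+1}=0}`) of the base `K ∩ {x_{n+1}=0}`. -/
def relintBase (n : ℕ) (K : Set (V n)) : Set (V n) :=
  {x | x (Fin.last n) = 0 ∧ ∃ ε > 0, ∀ y : V n, y (Fin.last n) = 0 → ‖y - x‖ < ε → y ∈ K}

/-- A `θ`-capillary convex body. -/
def IsCapBody (n : ℕ) (θ : ℝ) (K : Set (V n)) : Prop :=
  IsCompact K ∧ Convex ℝ K ∧ (interior K).Nonempty ∧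
  (∀ x ∈ K, 0 ≤ x (Fin.last n)) ∧
  (∀ x ∈ K, 0 < x (Fin.last n) → ∀ u : V n, ‖u‖ = 1 → ⟪u, x⟫ = suppFn n K u →
    Real.cos θ ≤ u (Fin.last n)) ∧
  (∀ v : V n, ‖v‖ = 1 → v (Fin.last n) = 0 →
    suppFn n K (Real.sin θ • v + Real.cos θ • Etop n) = Real.sin θ * suppFn n K v) ∧
  (relintBase n K).Nonempty

/-- `ψ` is one of `x²`, `x^p (p<0)`, `-log x`. -/
def PsiOK (ψ : ℝ → ℝ) : Prop :=
  (ψ = fun x : ℝ => x ^ 2) ∨ (∃ p : ℝ, p < 0 ∧ ψ = fun x : ℝ => x ^ p) ∨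
    (ψ = fun x : ℝ => -Real.log x)

/-!
A convex body whose width is at least `ε` in every direction contains a parallelepiped of definite
volume, so it suffices to bound the width of the image of `∇G` from below.

The bound `c₀ ≤ σ_k` forces `ΔG ≥ min 1 c₀`, and the maximum principle then keeps `∇G` from staying
close to any fixed vector on the cap. With the `C²` bound this produces, for every `e` in the cap,
a value `∇G(u)` lying a definite amount below `∇G(e)` in the direction `e + ρ a`, where `a` is the
axis. By convexity and the Robin condition the image of `∇G` lies in the half-space `⟪a, ·⟫ ≥ 0`,
and boundary points of the cap are mapped to its boundary. Taking for `e` the pole of the cap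
therefore bounds the height of `∇G(a)`, taking for `e` a boundary point bounds the width in the
corresponding horizontal direction, and the two estimates combine to bound the width in every
direction.
-/

section Volume

open InnerProductSpace Module

theorem parallelepiped_inv_card_smul_subset {ι F : Type*} [Fintype ι] [AddCommGroup F]
    [Module ℝ F] {K : Set F} (hK : Convex ℝ K) (hK₀ : 0 ∈ K) {f : ι → F} (hf : ∀ i, f i ∈ K) :
    parallelepiped ((Fintype.card ι : ℝ)⁻¹ • f) ⊆ K := by
  intro x hx
  obtain ⟨t, ht, rfl⟩ := (mem_parallelepiped_iff _ x).1 hx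
  rcases isEmpty_or_nonempty ι with hι | hι
  · simpa only [Finset.univ_eq_empty, Finset.sum_empty] using hK₀
  · simp only [Pi.smul_apply, smul_comm (t _)]
    exact hK.sum_mem (fun _ _ ↦ by positivity) (by simp)
      fun i _ ↦ hK.smul_mem_of_zero_mem hK₀ (hf i) ⟨ht.1 i, ht.2 i⟩

variable {E : Type*} [NormedAddCommGroup E] [InnerProductSpace ℝ E]

theorem inner_gramSchmidt_of_forall_lt_inner_eq_zero {ι : Type*} [LinearOrder ι]
    [LocallyFiniteOrderBot ι] [WellFoundedLT ι] {f : ι → E} {i : ι} {e : E}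
    (he : ∀ j < i, ⟪e, f j⟫ = 0) : ⟪e, gramSchmidt ℝ f i⟫ = ⟪e, f i⟫ := by
  have he_gs : ∀ j ∈ Finset.Iio i, ⟪e, gramSchmidt ℝ f j⟫ = 0 := fun j hj ↦ by
    have hspan : Submodule.span ℝ (f '' Iic j) ≤ (ℝ ∙ e)ᗮ := by
      rw [Submodule.span_le]
      rintro _ ⟨l, hl, rfl⟩
      exact Submodule.mem_orthogonal_singleton_iff_inner_right.2
        (he l (lt_of_le_of_lt hl (Finset.mem_Iio.1 hj)))
    exact Submodule.mem_orthogonal_singleton_iff_inner_right.1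
      (hspan (gramSchmidt_mem_span ℝ f le_rfl))
  conv_rhs => rw [gramSchmidt_def'' ℝ f i, inner_add_right, inner_sum]
  rw [Finset.sum_eq_zero fun j hj ↦ by rw [inner_smul_right, he_gs j hj, mul_zero], add_zero]

variable [FiniteDimensional ℝ E]

theorem pow_finrank_le_abs_det_gramSchmidtOrthonormalBasis {r : ℝ} (hr : 0 < r)
    {f : Fin (finrank ℝ E) → E}
    (hf : ∀ i, ∃ e, ‖e‖ = 1 ∧ (∀ j < i, ⟪e, f j⟫ = 0) ∧ r ≤ |⟪e, f i⟫|) :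
    r ^ finrank ℝ E ≤
      |(gramSchmidtOrthonormalBasis (𝕜 := ℝ) (Fintype.card_fin _).symm f).toBasis.det f| := by
  have hnorm (i) : r ≤ ‖gramSchmidt ℝ f i‖ := by
    obtain ⟨e, he, horth, hre⟩ := hf i
    rw [← inner_gramSchmidt_of_forall_lt_inner_eq_zero horth] at hre
    simpa only [he, one_mul] using hre.trans (abs_real_inner_le_norm e _)
  have hpos (i) : 0 < ‖gramSchmidt ℝ f i‖ := hr.trans_le (hnorm i)
  have hdiag (i) : ⟪gramSchmidtOrthonormalBasis (𝕜 := ℝ) (Fintype.card_fin _).symm f i, f i⟫ =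
      ‖gramSchmidt ℝ f i‖ := by
    have hne : gramSchmidtNormed ℝ f i ≠ 0 :=
      smul_ne_zero (by simpa using (hpos i).ne') (norm_pos_iff.1 (hpos i))
    rw [gramSchmidtOrthonormalBasis_apply _ hne, gramSchmidtNormed, real_inner_smul_left,
      ← inner_gramSchmidt_of_forall_lt_inner_eq_zero fun j hj ↦
        gramSchmidt_inv_triangular ℝ f hj, real_inner_self_eq_norm_sq]
    simpa [pow_two] using inv_mul_cancel_left₀ (hpos i).ne' _
  rw [gramSchmidtOrthonormalBasis_det, Finset.prod_congr rfl fun i _ ↦ hdiag i, Finset.abs_prod]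
  calc r ^ finrank ℝ E = ∏ _i : Fin (finrank ℝ E), r := by simp
    _ ≤ ∏ i, |‖gramSchmidt ℝ f i‖| :=
      Finset.prod_le_prod (fun _ _ ↦ hr.le) fun i _ ↦ (hnorm i).trans (le_abs_self _)

theorem exists_norm_eq_one_forall_inner_eq_zero {m : ℕ} (hm : m < finrank ℝ E) (f : Fin m → E) :
    ∃ e : E, ‖e‖ = 1 ∧ ∀ j, ⟪e, f j⟫ = 0 := by
  have hspan : Submodule.span ℝ (range f) ≠ ⊤ := fun htop ↦ by
    have hle := finrank_range_le_card (R := ℝ) f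
    rw [Set.finrank, htop, finrank_top, Fintype.card_fin] at hle
    exact hle.not_gt hm
  obtain ⟨w, hw, hw0⟩ := Submodule.exists_mem_ne_zero_of_ne_bot
    (mt Submodule.orthogonal_eq_bot_iff.1 hspan)
  refine ⟨‖w‖⁻¹ • w, norm_smul_inv_norm hw0, fun j ↦ ?_⟩
  rw [real_inner_smul_left, Submodule.inner_left_of_mem_orthogonal
    (Submodule.subset_span (mem_range_self j)) hw, mul_zero]

theorem exists_forall_add_mem_of_forall_le_inner_sub {K : Set E} {ε : ℝ}
    (hwidth : ∀ e : E, ‖e‖ = 1 → ∃ x ∈ K, ∃ y ∈ K, ε ≤ ⟪e, x - y⟫) (x₀ : E)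
    {m : ℕ} (hm : m ≤ finrank ℝ E) :
    ∃ f : Fin m → E, ∀ i, x₀ + f i ∈ K ∧
      ∃ e, ‖e‖ = 1 ∧ (∀ j < i, ⟪e, f j⟫ = 0) ∧ ε / 2 ≤ |⟪e, f i⟫| := by
  induction m with
  | zero => exact ⟨Fin.elim0, fun i ↦ i.elim0⟩
  | succ m ih =>
    obtain ⟨f, hf⟩ := ih (by omega)
    obtain ⟨e, he, horth⟩ := exists_norm_eq_one_forall_inner_eq_zero hm f
    obtain ⟨z, hzK, hz⟩ : ∃ z ∈ K, ε / 2 ≤ |⟪e, z - x₀⟫| := by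
      obtain ⟨x, hx, y, hy, hxy⟩ := hwidth e he
      have hsplit : ⟪e, x - y⟫ = ⟪e, x - x₀⟫ - ⟪e, y - x₀⟫ := by
        rw [← inner_sub_right, sub_sub_sub_cancel_right]
      by_contra! hlt
      linarith [(abs_lt.1 (hlt x hx)).2, (abs_lt.1 (hlt y hy)).1]
    refine ⟨Fin.snoc f (z - x₀), fun i ↦ ?_⟩
    cases i using Fin.lastCases with
    | last =>
      refine ⟨by simpa using hzK, e, he, fun j hj ↦ ?_, by simpa using hz⟩
      cases j using Fin.lastCases with
      | last => exact absurd hj (lt_irrefl _)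
      | cast j => simpa using horth j
    | cast i =>
      obtain ⟨hfi, e', he', horth', hr⟩ := hf i
      refine ⟨by simpa using hfi, e', he', fun j hj ↦ ?_, by simpa using hr⟩
      cases j using Fin.lastCases with
      | last => exact absurd hj (Fin.le_last _).not_gt
      | cast j => simpa using horth' j (by simpa using hj)

theorem ofReal_pow_finrank_le_volume_of_forall_le_inner_sub [MeasurableSpace E] [BorelSpace E]
    {K : Set E} (hK : Convex ℝ K) (hne : K.Nonempty) {ε : ℝ} (hε : 0 < ε)
    (hwidth : ∀ e : E, ‖e‖ = 1 → ∃ x ∈ K, ∃ y ∈ K, ε ≤ ⟪e, x - y⟫) :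
    ENNReal.ofReal (((finrank ℝ E : ℝ)⁻¹ * (ε / 2)) ^ finrank ℝ E) ≤ volume K := by
  obtain ⟨x₀, hx₀⟩ := hne
  obtain ⟨f, hf⟩ := exists_forall_add_mem_of_forall_le_inner_sub hwidth x₀ le_rfl
  set b := gramSchmidtOrthonormalBasis (𝕜 := ℝ) (Fintype.card_fin _).symm f
  have hdet : (ε / 2) ^ finrank ℝ E ≤ |b.toBasis.det f| :=
    pow_finrank_le_abs_det_gramSchmidtOrthonormalBasis (half_pos hε) fun i ↦ (hf i).2
  have hsub : parallelepiped ((finrank ℝ E : ℝ)⁻¹ • f) ⊆ (x₀ + ·) ⁻¹' K := by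
    simpa only [Fintype.card_fin] using parallelepiped_inv_card_smul_subset
      (hK.translate_preimage_right x₀) (by simpa using hx₀) fun i ↦ (hf i).1
  calc ENNReal.ofReal (((finrank ℝ E : ℝ)⁻¹ * (ε / 2)) ^ finrank ℝ E)
      ≤ ENNReal.ofReal |b.toBasis.det ((finrank ℝ E : ℝ)⁻¹ • f)| := by
        have hsmul : b.toBasis.det ((finrank ℝ E : ℝ)⁻¹ • f) =
            ((finrank ℝ E : ℝ)⁻¹) ^ finrank ℝ E * b.toBasis.det f := by
          simpa [Pi.smul_def] using b.toBasis.det.map_smul_univ (fun _ ↦ (finrank ℝ E : ℝ)⁻¹) f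
        rw [hsmul, abs_mul, mul_pow, abs_of_nonneg (by positivity)]
        gcongr
    _ = volume (parallelepiped ((finrank ℝ E : ℝ)⁻¹ • f)) := by
        rw [← Measure.addHaar_parallelepiped, b.addHaar_eq_volume]
    _ ≤ volume ((x₀ + ·) ⁻¹' K) := measure_mono hsub
    _ = volume K := measure_preimage_add _ _ _

end Volume

section ElementarySymmetric

theorem esymm_cons_succ {R : Type*} [CommSemiring R] (a : R) (s : Multiset R) (k : ℕ) :
    (a ::ₘ s).esymm (k + 1) = s.esymm (k + 1) + a * s.esymm k := by
  simp [Multiset.esymm, Multiset.powersetCard_cons, Multiset.sum_map_mul_left]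

theorem esymm_le_sum_pow {R : Type*} [CommSemiring R] [PartialOrder R] [IsOrderedRing R]
    {s : Multiset R} (hs : ∀ a ∈ s, 0 ≤ a) (k : ℕ) : s.esymm k ≤ s.sum ^ k := by
  induction s using Multiset.induction_on generalizing k with
  | empty => cases k <;> simp [Multiset.esymm, Multiset.powersetCard_zero_right]
  | cons a s ih =>
    have ha : 0 ≤ a := hs a (Multiset.mem_cons_self a s)
    have hs' : ∀ b ∈ s, 0 ≤ b := fun b hb ↦ hs b (Multiset.mem_cons_of_mem hb)
    have hsum : 0 ≤ s.sum := Multiset.sum_nonneg hs'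
    cases k with
    | zero => simp [Multiset.esymm]
    | succ k =>
      calc (a ::ₘ s).esymm (k + 1) = s.esymm (k + 1) + a * s.esymm k := esymm_cons_succ a s k
        _ ≤ s.sum ^ (k + 1) + a * s.sum ^ k := by gcongr <;> exact ih hs' _
        _ = (a + s.sum) * s.sum ^ k := by ring
        _ ≤ (a + s.sum) * (a + s.sum) ^ k := by
          gcongr
          exact le_add_of_nonneg_left ha
        _ = (a ::ₘ s).sum ^ (k + 1) := by rw [Multiset.sum_cons, pow_succ']

theorem neg_one_pow_mul_charpoly_coeff_le_trace_pow {ι : Type*} [Fintype ι] [DecidableEq ι]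
    {M : Matrix ι ι ℝ} (hM : M.PosSemidef) {k : ℕ} (hk : k ≤ Fintype.card ι) :
    (-1) ^ k * M.charpoly.coeff (Fintype.card ι - k) ≤ M.trace ^ k := by
  set s : Multiset ℝ := Finset.univ.val.map hM.isHermitian.eigenvalues
  have hcard : Multiset.card s = Fintype.card ι := by simp [s]
  have hcharpoly : M.charpoly = (s.map fun t ↦ Polynomial.X - Polynomial.C t).prod := by
    rw [hM.isHermitian.charpoly_eq, Multiset.map_map]
    rfl
  have htrace : M.trace = s.sum := hM.isHermitian.trace_eq_sum_eigenvalues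
  rw [hcharpoly, Multiset.prod_X_sub_C_coeff s (by omega), hcard, htrace, Nat.sub_sub_self hk,
    ← mul_assoc, ← pow_add, Even.neg_one_pow ⟨k, rfl⟩, one_mul]
  refine esymm_le_sum_pow (fun a ha ↦ ?_) k
  obtain ⟨i, -, rfl⟩ := Multiset.mem_map.1 ha
  exact hM.eigenvalues_nonneg i

theorem min_one_le_of_le_pow {c t : ℝ} {k : ℕ} (hk : k ≠ 0) (ht : 0 ≤ t) (h : c ≤ t ^ k) :
    min 1 c ≤ t := by
  rcases le_total 1 t with h1 | h1
  · exact (min_le_left _ _).trans h1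
  · exact (min_le_right _ _).trans (h.trans (pow_le_of_le_one ht h1 hk))

end ElementarySymmetric

section SecondDerivative

variable {F : Type*} [NormedAddCommGroup F] [NormedSpace ℝ F] {f : F → ℝ} {x y : F}

theorem hasDerivAt_comp_add_smul {G : Type*} [NormedAddCommGroup G] [NormedSpace ℝ G] {g : F → G}
    (v : F) {t : ℝ} (hg : DifferentiableAt ℝ g (x + t • v)) :
    HasDerivAt (fun t : ℝ ↦ g (x + t • v)) (fderiv ℝ g (x + t • v) v) t := by
  have hline : HasDerivAt (fun t : ℝ ↦ x + t • v) v t := by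
    simpa using ((hasDerivAt_id t).smul_const v).const_add x
  exact hg.hasFDerivAt.comp_hasDerivAt t hline

theorem hasDerivAt_fderiv_comp_add_smul (v : F) {t : ℝ} (hf : ContDiffAt ℝ 2 f (x + t • v)) :
    HasDerivAt (fun t : ℝ ↦ fderiv ℝ f (x + t • v) v)
      (fderiv ℝ (fderiv ℝ f) (x + t • v) v v) t := by
  have hf' : DifferentiableAt ℝ (fderiv ℝ f) (x + t • v) :=
    (hf.fderiv_right (m := 1) le_rfl).differentiableAt one_ne_zero
  simpa using (hasDerivAt_comp_add_smul v hf').clm_apply (hasDerivAt_const t v)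

theorem fderiv_fderiv_apply_nonpos_of_isLocalMax (hf : ContDiffAt ℝ 2 f x) (hmax : IsLocalMax f x)
    (v : F) : fderiv ℝ (fderiv ℝ f) x v v ≤ 0 := by
  by_contra! hpos
  have hline : Filter.Tendsto (fun t : ℝ ↦ x + t • v) (nhds 0) (nhds x) :=
    (by fun_prop : Continuous fun t : ℝ ↦ x + t • v).tendsto' _ _ (by simp)
  set g : ℝ → ℝ := fun t ↦ f (x + t • v)
  have hmax₀ : IsLocalMax g 0 := by
    simpa [g, IsLocalMax, IsMaxFilter] using hline.eventually hmax
  have hderiv : deriv g =ᶠ[nhds 0] fun t ↦ fderiv ℝ f (x + t • v) v := by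
    filter_upwards [hline.eventually (hf.eventually (by simp))] with t ht
    exact (hasDerivAt_comp_add_smul v (ht.differentiableAt two_ne_zero)).deriv
  have hderiv2 : deriv (deriv g) 0 = fderiv ℝ (fderiv ℝ f) x v v := by
    simpa using hderiv.deriv_eq.trans
      (hasDerivAt_fderiv_comp_add_smul (t := 0) v (by simpa using hf)).deriv
  have hmin : IsLocalMin g 0 :=
    isLocalMin_of_deriv_deriv_pos (hderiv2 ▸ hpos) hmax₀.deriv_eq_zero
      (hasDerivAt_comp_add_smul v (by simpa using hf.differentiableAt two_ne_zero)).continuousAt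
  have hconst : g =ᶠ[nhds 0] fun _ ↦ g 0 := by
    filter_upwards [hmax₀, hmin] with t h₁ h₂ using le_antisymm h₁ h₂
  have hzero : deriv (deriv g) 0 = 0 := by
    rw [hconst.deriv.deriv_eq]
    simp
  exact hpos.ne' (hderiv2 ▸ hzero)

theorem add_fderiv_le_of_forall_segment_nonneg
    (hf : ∀ z ∈ segment ℝ y x, ContDiffAt ℝ 2 f z)
    (hnonneg : ∀ z ∈ segment ℝ y x, ∀ v, 0 ≤ fderiv ℝ (fderiv ℝ f) z v v) :
    f y + fderiv ℝ f y (x - y) ≤ f x := by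
  have hmem : ∀ t ∈ Icc (0 : ℝ) 1, y + t • (x - y) ∈ segment ℝ y x := fun t ht ↦ by
    rw [segment_eq_image']
    exact mem_image_of_mem _ ht
  have hderiv : ∀ t ∈ Icc (0 : ℝ) 1, HasDerivAt (fun t : ℝ ↦ f (y + t • (x - y)))
      (fderiv ℝ f (y + t • (x - y)) (x - y)) t := fun t ht ↦
    hasDerivAt_comp_add_smul _ ((hf _ (hmem t ht)).differentiableAt two_ne_zero)
  have hconvex : ConvexOn ℝ (Icc 0 1) fun t : ℝ ↦ f (y + t • (x - y)) :=
    convexOn_of_hasDerivWithinAt2_nonneg (convex_Icc 0 1)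
      (fun t ht ↦ (hderiv t ht).continuousAt.continuousWithinAt)
      (fun t ht ↦ (hderiv t (interior_subset ht)).hasDerivWithinAt)
      (fun t ht ↦ (hasDerivAt_fderiv_comp_add_smul _
        (hf _ (hmem t (interior_subset ht)))).hasDerivWithinAt)
      fun t ht ↦ hnonneg _ (hmem t (interior_subset ht)) _
  have hslope := hconvex.le_slope_of_hasDerivAt (left_mem_Icc.2 zero_le_one)
    (right_mem_Icc.2 zero_le_one) zero_lt_one (hderiv 0 (left_mem_Icc.2 zero_le_one))
  simp only [slope, zero_smul, add_zero, one_smul, sub_zero, inv_one, add_sub_cancel,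
    vsub_eq_sub] at hslope
  linarith

theorem exists_norm_le_one_half_norm_le_apply (L : F →L[ℝ] ℝ) :
    ∃ w : F, ‖w‖ ≤ 1 ∧ ‖L‖ / 2 ≤ L w := by
  rcases eq_or_ne L 0 with rfl | hL
  · exact ⟨0, by simp⟩
  obtain ⟨w, hw, hlt⟩ := L.exists_lt_apply_of_lt_opNorm (half_lt_self (norm_pos_iff.2 hL))
  rcases le_abs.1 hlt.le with hle | hle
  · exact ⟨w, hw.le, hle⟩
  · exact ⟨-w, by simpa using hw.le, by simpa using hle⟩

end SecondDerivative

section Laplacian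

open InnerProductSpace Module Laplacian

variable {E : Type*} [NormedAddCommGroup E] [InnerProductSpace ℝ E] [FiniteDimensional ℝ E]

theorem laplacian_eq_sum_fderiv_fderiv {ι : Type*} [Fintype ι] (b : OrthonormalBasis ι ℝ E)
    (f : E → ℝ) (x : E) : Δ f x = ∑ i, fderiv ℝ (fderiv ℝ f) x (b i) (b i) := by
  simp [laplacian_eq_iteratedFDeriv_orthonormalBasis f b, iteratedFDeriv_two_apply]

theorem laplacian_nonpos_of_isLocalMax {f : E → ℝ} {x : E} (hf : ContDiffAt ℝ 2 f x)
    (hmax : IsLocalMax f x) : Δ f x ≤ 0 := by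
  rw [laplacian_eq_sum_fderiv_fderiv (stdOrthonormalBasis ℝ E)]
  exact Finset.sum_nonpos fun i _ ↦ fderiv_fderiv_apply_nonpos_of_isLocalMax hf hmax _

theorem laplacian_clm_add_mul_norm_sub_sq (p : E →L[ℝ] ℝ) (κ : ℝ) (a x : E) :
    Δ (fun y ↦ p y + κ / 2 * ‖y - a‖ ^ 2 : E → ℝ) x = finrank ℝ E * κ := by
  have hfderiv : fderiv ℝ (fun x ↦ p x + κ / 2 * ‖x - a‖ ^ 2) =
      fun x ↦ p + κ • innerSL ℝ (x - a) := by
    ext1 x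
    refine HasFDerivAt.fderiv (p.hasFDerivAt.add
      ((((hasFDerivAt_id x).sub_const a).norm_sq).const_mul (κ / 2)) |>.congr_fderiv ?_)
    ext v
    simp
    ring
  have hfderiv2 : fderiv ℝ (fun x ↦ p + κ • innerSL ℝ (x - a)) x = κ • innerSL ℝ :=
    (((innerSL ℝ (E := E)).hasFDerivAt.comp x ((hasFDerivAt_id x).sub_const a)).const_smul
      κ).const_add p |>.fderiv
  rw [laplacian_eq_sum_fderiv_fderiv (stdOrthonormalBasis ℝ E), hfderiv, hfderiv2]
  change ∑ i, κ * ⟪stdOrthonormalBasis ℝ E i, stdOrthonormalBasis ℝ E i⟫ = _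
  simp

/- The Laplacian of `f - p - κ/2 ‖· - a‖²` is positive, so its maximum over the ball lies on the
sphere, where `f - p` thus exceeds its value at `a` by at least `κ r²/2`. -/
theorem exists_mul_le_norm_fderiv_sub {f : E → ℝ} {a : E} {r κ : ℝ} (hr : 0 < r)
    (hf : ∀ x ∈ Metric.closedBall a r, ContDiffAt ℝ 2 f x)
    (hlap : ∀ x ∈ Metric.closedBall a r, finrank ℝ E * κ < Δ f x) (p : E →L[ℝ] ℝ) :
    ∃ x ∈ Metric.closedBall a r, κ * r / 2 ≤ ‖fderiv ℝ f x - p‖ := by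
  set q : E → ℝ := fun x ↦ p x + κ / 2 * ‖x - a‖ ^ 2 with hq_def
  have hq : ContDiff ℝ 2 q :=
    p.contDiff.add (((contDiff_id.sub contDiff_const).norm_sq ℝ).const_smul (κ / 2))
  have ha : a ∈ Metric.closedBall a r := Metric.mem_closedBall_self hr.le
  obtain ⟨z, hz, hmax⟩ := (isCompact_closedBall a r).exists_isMaxOn ⟨a, ha⟩
    (f := f - q) fun x hx ↦ ((hf x hx).sub hq.contDiffAt).continuousAt.continuousWithinAt
  have hzr : ‖z - a‖ = r := by
    refine ((mem_closedBall_iff_norm.1 hz).eq_or_lt).resolve_right fun hlt ↦ ?_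
    have hlocal : IsLocalMax (f - q) z :=
      hmax.isLocalMax (Filter.mem_of_superset
        (Metric.isOpen_ball.mem_nhds (mem_ball_iff_norm.2 hlt)) Metric.ball_subset_closedBall)
    have hnonpos : Δ (f - q) z ≤ 0 :=
      laplacian_nonpos_of_isLocalMax ((hf z hz).sub hq.contDiffAt) hlocal
    rw [(hf z hz).laplacian_sub hq.contDiffAt, laplacian_clm_add_mul_norm_sub_sq] at hnonpos
    linarith [hlap z hz]
  have hsub : ∀ x ∈ Metric.closedBall a r,
      HasFDerivWithinAt (f - ⇑p) (fderiv ℝ f x - p) (Metric.closedBall a r) x := fun x hx ↦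
    (((hf x hx).differentiableAt two_ne_zero).hasFDerivAt.sub p.hasFDerivAt).hasFDerivWithinAt
  obtain ⟨x, hx, hmvt⟩ := domain_mvt hsub (convex_closedBall a r) ha hz
  refine ⟨x, (convex_closedBall a r).segment_subset ha hz hx, ?_⟩
  have hincr : κ / 2 * r ^ 2 ≤ (f - ⇑p) z - (f - ⇑p) a := by
    have := hmax ha
    simp only [hq_def, Pi.sub_apply, sub_self, norm_zero, hzr, mem_ofPred_eq] at this ⊢
    linarith
  have hle : (fderiv ℝ f x - p) (z - a) ≤ ‖fderiv ℝ f x - p‖ * r :=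
    hzr ▸ (le_abs_self _).trans ((fderiv ℝ f x - p).le_opNorm (z - a))
  refine le_of_mul_le_mul_right ?_ hr
  linarith

end Laplacian

section Cone

variable {E : Type*} [NormedAddCommGroup E] [InnerProductSpace ℝ E] {a x y u : E} {c : ℝ}

/-- The open cone of vectors whose angle with the unit vector `a` is less than `arccos c`. -/
def openCone (a : E) (c : ℝ) : Set E := {x | c * ‖x‖ < ⟪a, x⟫}

/-- The cone over `unitCap a c`: the closure of `openCone a c` without its apex, at which
homogeneous functions need not be differentiable. -/
def puncturedCone (a : E) (c : ℝ) : Set E := {x | x ≠ 0 ∧ c * ‖x‖ ≤ ⟪a, x⟫}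

/-- The spherical cap of unit vectors whose angle with the unit vector `a` is at most
`arccos c`. -/
def unitCap (a : E) (c : ℝ) : Set E := {u | ‖u‖ = 1 ∧ c ≤ ⟪a, u⟫}

theorem isOpen_openCone : IsOpen (openCone a c) :=
  isOpen_lt (by fun_prop) (by fun_prop)

theorem convex_openCone (hc : 0 ≤ c) : Convex ℝ (openCone a c) := by
  have hconvex : ConvexOn ℝ univ fun x : E ↦ c * ‖x‖ - ⟪a, x⟫ :=
    (convexOn_univ_norm.smul hc).sub ((innerSL ℝ a).toLinearMap.concaveOn convex_univ)
  simpa [openCone] using hconvex.convex_lt 0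

theorem openCone_subset_puncturedCone : openCone a c ⊆ puncturedCone a c := by
  refine fun x hx ↦ ⟨?_, hx.le⟩
  rintro rfl
  simp [openCone] at hx

theorem unitCap_subset_puncturedCone : unitCap a c ⊆ puncturedCone a c := fun u hu ↦
  ⟨norm_ne_zero_iff.1 (by simp [hu.1]), by simpa [hu.1] using hu.2⟩

theorem inv_norm_smul_mem_unitCap (hx : x ∈ puncturedCone a c) : ‖x‖⁻¹ • x ∈ unitCap a c := by
  refine ⟨norm_smul_inv_norm hx.1, ?_⟩
  rw [real_inner_smul_right, ← div_eq_inv_mul, le_div_iff₀ (norm_pos_iff.2 hx.1)]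
  exact hx.2

theorem smul_mem_openCone {l : ℝ} (hl : 0 < l) (hx : x ∈ openCone a c) : l • x ∈ openCone a c := by
  simpa [openCone, norm_smul, abs_of_pos hl, real_inner_smul_right, mul_left_comm c] using
    mul_lt_mul_of_pos_left hx hl

theorem add_mem_openCone (hc : 0 ≤ c) (hx : x ∈ puncturedCone a c) (hy : y ∈ openCone a c) :
    x + y ∈ openCone a c :=
  calc c * ‖x + y‖ ≤ c * (‖x‖ + ‖y‖) := mul_le_mul_of_nonneg_left (norm_add_le x y) hc
    _ = c * ‖x‖ + c * ‖y‖ := mul_add _ _ _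
    _ < ⟪a, x⟫ + ⟪a, y⟫ := add_lt_add_of_le_of_lt hx.2 hy
    _ = ⟪a, x + y⟫ := (inner_add_right _ _ _).symm

theorem axis_mem_openCone (ha : ‖a‖ = 1) (hc1 : c < 1) : a ∈ openCone a c := by
  simpa [openCone, ha] using hc1

theorem axis_mem_unitCap (ha : ‖a‖ = 1) (hc1 : c < 1) : a ∈ unitCap a c :=
  ⟨ha, by simpa [ha] using hc1.le⟩

theorem closedBall_subset_openCone (ha : ‖a‖ = 1) (hc : 0 ≤ c) (hc1 : c < 1) :
    Metric.closedBall a ((1 - c) / 2) ⊆ openCone a c := fun x hx ↦ by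
  have hdist : ‖x - a‖ ≤ (1 - c) / 2 := mem_closedBall_iff_norm.1 hx
  have hnorm : ‖x‖ ≤ 1 + (1 - c) / 2 := by linarith [norm_le_norm_add_norm_sub' x a]
  have hinner : ⟪a, x⟫ = 1 + ⟪a, x - a⟫ := by
    rw [inner_sub_right, real_inner_self_eq_norm_sq, ha]
    ring
  have hcs : |⟪a, x - a⟫| ≤ ‖x - a‖ := by simpa [ha] using abs_real_inner_le_norm a (x - a)
  calc c * ‖x‖ ≤ c * (1 + (1 - c) / 2) := mul_le_mul_of_nonneg_left hnorm hc
    _ < 1 - (1 - c) / 2 := by nlinarith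
    _ ≤ ⟪a, x⟫ := by linarith [neg_abs_le ⟪a, x - a⟫]

theorem puncturedCone_subset_closure_openCone (ha : ‖a‖ = 1) (hc : 0 ≤ c) (hc1 : c < 1) :
    puncturedCone a c ⊆ closure (openCone a c) := fun x hx ↦ by
  have htendsto : Filter.Tendsto (fun t : ℝ ↦ x + t • a) (nhdsWithin 0 (Ioi 0)) (nhds x) :=
    ((by fun_prop : Continuous fun t : ℝ ↦ x + t • a).tendsto' 0 x (by simp)).mono_left
      nhdsWithin_le_nhds
  refine mem_closure_of_tendsto htendsto ?_
  filter_upwards [self_mem_nhdsWithin] with t ht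
  exact add_mem_openCone hc hx (smul_mem_openCone ht (axis_mem_openCone ha hc1))

theorem norm_sq_smul_add_smul (ha : ‖a‖ = 1) {v : E} (hv : ‖v‖ = 1) (hav : ⟪a, v⟫ = 0) (r t : ℝ) :
    ‖r • v + t • a‖ ^ 2 = r ^ 2 + t ^ 2 := by
  rw [norm_add_sq_real, real_inner_smul_left, real_inner_smul_right, real_inner_comm, hav]
  simp [norm_smul, ha, hv]

theorem inner_smul_add_smul (ha : ‖a‖ = 1) {v : E} (hav : ⟪a, v⟫ = 0) (r t : ℝ) :
    ⟪a, r • v + t • a⟫ = t := by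
  simp [inner_add_right, real_inner_smul_right, hav, ha]

theorem exists_eq_smul_add_inner_smul [FiniteDimensional ℝ E] (hE : 2 ≤ Module.finrank ℝ E)
    (ha : ‖a‖ = 1) (x : E) :
    ∃ v : E, ‖v‖ = 1 ∧ ⟪a, v⟫ = 0 ∧ ∃ r : ℝ, 0 ≤ r ∧ x = r • v + ⟪a, x⟫ • a := by
  rcases eq_or_ne (x - ⟪a, x⟫ • a) 0 with hx | hx
  · obtain ⟨v, hv, hva⟩ := exists_norm_eq_one_forall_inner_eq_zero (m := 1) hE fun _ ↦ a
    exact ⟨v, hv, (real_inner_comm _ _).trans (hva 0), 0, le_rfl, by simpa [sub_eq_zero] using hx⟩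
  · refine ⟨‖x - ⟪a, x⟫ • a‖⁻¹ • (x - ⟪a, x⟫ • a), norm_smul_inv_norm hx, ?_,
      ‖x - ⟪a, x⟫ • a‖, norm_nonneg _, ?_⟩
    · simp [real_inner_smul_right, inner_sub_right, ha]
    · rw [smul_inv_smul₀ (norm_ne_zero_iff.2 hx), sub_add_cancel]

/-- The point of the boundary sphere of `unitCap a c` in the direction of the unit vector `v`
orthogonal to `a`. -/
def capBoundary (a : E) (c : ℝ) (v : E) : E := √(1 - c ^ 2) • v + c • a

theorem clm_apply_capBoundary (L : E →L[ℝ] ℝ) (v : E) :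
    L (capBoundary a c v) = √(1 - c ^ 2) * L v + c * L a := by
  simp [capBoundary]

theorem inner_capBoundary (ha : ‖a‖ = 1) {v : E} (hav : ⟪a, v⟫ = 0) :
    ⟪a, capBoundary a c v⟫ = c :=
  inner_smul_add_smul ha hav _ _

theorem capBoundary_mem_unitCap (ha : ‖a‖ = 1) (hc : 0 ≤ c) (hc1 : c < 1) {v : E} (hv : ‖v‖ = 1)
    (hav : ⟪a, v⟫ = 0) : capBoundary a c v ∈ unitCap a c := by
  refine ⟨?_, (inner_capBoundary ha hav).ge⟩
  rw [← sq_eq_sq₀ (norm_nonneg _) zero_le_one, capBoundary, norm_sq_smul_add_smul ha hv hav,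
    sq_sqrt (by nlinarith)]
  ring

end Cone

section CapillaryPotential

open InnerProductSpace Module Laplacian

variable {E : Type*} [NormedAddCommGroup E] [InnerProductSpace ℝ E] [FiniteDimensional ℝ E]

/-- Positively one-homogeneous `C²` functions on the cone over a spherical cap which satisfy the
Robin condition `∂ₐG = 0` on the boundary of the cap and whose Hessian on the cap is nonnegative, of
norm at most `A` and of trace at least `δ`. These are the capillary support functions with a `C²`
bound and a curvature bound; cones are indexed by `c = cos θ`. -/
structure IsCapillaryPotential (a : E) (c A δ : ℝ) (G : E → ℝ) : Prop where
  contDiffAt : ∀ x ∈ puncturedCone a c, ContDiffAt ℝ 2 G x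
  map_smul_of_pos : ∀ l : ℝ, 0 < l → ∀ x ∈ puncturedCone a c, G (l • x) = l * G x
  robin : ∀ u ∈ unitCap a c, ⟪a, u⟫ = c → fderiv ℝ G u a = 0
  fderiv_fderiv_nonneg : ∀ u ∈ unitCap a c, ∀ v, 0 ≤ fderiv ℝ (fderiv ℝ G) u v v
  norm_fderiv_fderiv_le : ∀ u ∈ unitCap a c, ‖fderiv ℝ (fderiv ℝ G) u‖ ≤ A
  le_laplacian : ∀ u ∈ unitCap a c, δ ≤ Δ G u

namespace IsCapillaryPotential

variable {a x y e u : E} {c A δ : ℝ} {G : E → ℝ}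

theorem differentiableAt (h : IsCapillaryPotential a c A δ G) (hx : x ∈ puncturedCone a c) :
    DifferentiableAt ℝ G x :=
  (h.contDiffAt x hx).differentiableAt two_ne_zero

theorem differentiableAt_fderiv (h : IsCapillaryPotential a c A δ G) (hx : x ∈ puncturedCone a c) :
    DifferentiableAt ℝ (fderiv ℝ G) x :=
  ((h.contDiffAt x hx).fderiv_right (m := 1) le_rfl).differentiableAt one_ne_zero

theorem fderiv_apply_self (h : IsCapillaryPotential a c A δ G) (hx : x ∈ puncturedCone a c) :
    fderiv ℝ G x x = G x := by
  have hline : HasDerivAt (fun t : ℝ ↦ G (x + t • x)) (fderiv ℝ G x x) 0 := by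
    simpa using hasDerivAt_comp_add_smul (t := 0) x (by simpa using h.differentiableAt hx)
  have hlinear : HasDerivAt (fun t : ℝ ↦ (1 + t) * G x) (G x) 0 := by
    simpa using ((hasDerivAt_id (0 : ℝ)).const_add 1).mul_const (G x)
  refine hline.unique (hlinear.congr_of_eventuallyEq ?_)
  filter_upwards [lt_mem_nhds (show (-1 : ℝ) < 0 by norm_num)] with t ht
  rw [← h.map_smul_of_pos (1 + t) (by linarith) x hx, add_smul, one_smul]

theorem fderiv_smul (h : IsCapillaryPotential a c A δ G) {l : ℝ} (hl : 0 < l)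
    (hx : x ∈ openCone a c) : fderiv ℝ G (l • x) = fderiv ℝ G x := by
  have hlocal : (fun y ↦ G (l • y)) =ᶠ[nhds x] l • G := by
    filter_upwards [isOpen_openCone.mem_nhds hx] with y hy
    exact h.map_smul_of_pos l hl y (openCone_subset_puncturedCone hy)
  have heq := hlocal.fderiv_eq (𝕜 := ℝ)
  rw [fderiv_comp_smul, fderiv_const_smul (h.differentiableAt
    (openCone_subset_puncturedCone hx))] at heq
  exact smul_right_injective _ hl.ne' heq

theorem smul_fderiv_fderiv_smul (h : IsCapillaryPotential a c A δ G) {l : ℝ} (hl : 0 < l)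
    (hx : x ∈ openCone a c) :
    l • fderiv ℝ (fderiv ℝ G) (l • x) = fderiv ℝ (fderiv ℝ G) x := by
  have hlocal : (fun y ↦ fderiv ℝ G (l • y)) =ᶠ[nhds x] fderiv ℝ G := by
    filter_upwards [isOpen_openCone.mem_nhds hx] with y hy using h.fderiv_smul hl hy
  rw [← hlocal.fderiv_eq, fderiv_comp_smul]

theorem fderiv_fderiv_eq_inv_norm_smul (h : IsCapillaryPotential a c A δ G)
    (hx : x ∈ openCone a c) :
    fderiv ℝ (fderiv ℝ G) x = ‖x‖⁻¹ • fderiv ℝ (fderiv ℝ G) (‖x‖⁻¹ • x) :=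
  (h.smul_fderiv_fderiv_smul
    (inv_pos.2 (norm_pos_iff.2 (openCone_subset_puncturedCone hx).1)) hx).symm

theorem fderiv_fderiv_nonneg_of_mem_openCone (h : IsCapillaryPotential a c A δ G)
    (hx : x ∈ openCone a c) (v : E) : 0 ≤ fderiv ℝ (fderiv ℝ G) x v v := by
  rw [h.fderiv_fderiv_eq_inv_norm_smul hx]
  exact mul_nonneg (by positivity) (h.fderiv_fderiv_nonneg _
    (inv_norm_smul_mem_unitCap (openCone_subset_puncturedCone hx)) v)

set_option maxSynthPendingDepth 3 in
theorem norm_fderiv_fderiv_le_of_mem_openCone (h : IsCapillaryPotential a c A δ G)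
    (hx : x ∈ openCone a c) : ‖fderiv ℝ (fderiv ℝ G) x‖ ≤ ‖x‖⁻¹ * A := by
  rw [h.fderiv_fderiv_eq_inv_norm_smul hx, norm_smul, norm_inv, norm_norm]
  exact mul_le_mul_of_nonneg_left (h.norm_fderiv_fderiv_le _
    (inv_norm_smul_mem_unitCap (openCone_subset_puncturedCone hx))) (by positivity)

theorem inv_norm_mul_le_laplacian (h : IsCapillaryPotential a c A δ G) (hx : x ∈ openCone a c) :
    ‖x‖⁻¹ * δ ≤ Δ G x := by
  have hlaplacian : Δ G x = ‖x‖⁻¹ * Δ G (‖x‖⁻¹ • x) := by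
    simp only [laplacian_eq_sum_fderiv_fderiv (stdOrthonormalBasis ℝ E) G, Finset.mul_sum,
      h.fderiv_fderiv_eq_inv_norm_smul hx]
    rfl
  rw [hlaplacian]
  exact mul_le_mul_of_nonneg_left (h.le_laplacian _
    (inv_norm_smul_mem_unitCap (openCone_subset_puncturedCone hx))) (by positivity)

theorem fderiv_apply_le (h : IsCapillaryPotential a c A δ G) (ha : ‖a‖ = 1) (hc : 0 ≤ c)
    (hc1 : c < 1) (hx : x ∈ puncturedCone a c) (hy : y ∈ puncturedCone a c) :
    fderiv ℝ G y x ≤ G x := by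
  have hsub := puncturedCone_subset_closure_openCone ha hc hc1
  have hopen : ∀ x ∈ openCone a c, ∀ y ∈ openCone a c, fderiv ℝ G y x ≤ G x := fun x hx y hy ↦ by
    have hseg := (convex_openCone hc).segment_subset hy hx
    have htangent := add_fderiv_le_of_forall_segment_nonneg
      (fun z hz ↦ h.contDiffAt z (openCone_subset_puncturedCone (hseg hz)))
      fun z hz ↦ h.fderiv_fderiv_nonneg_of_mem_openCone (hseg hz)
    rw [map_sub, h.fderiv_apply_self (openCone_subset_puncturedCone hy)] at htangent
    linarith
  have hleft : ∀ y ∈ openCone a c, fderiv ℝ G y x ≤ G x := fun y hy ↦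
    ContinuousWithinAt.closure_le (hsub hx) (fderiv ℝ G y).continuous.continuousWithinAt
      (h.differentiableAt hx).continuousAt.continuousWithinAt fun z hz ↦ hopen z hz y hy
  exact ContinuousWithinAt.closure_le (f := fun y ↦ fderiv ℝ G y x) (hsub hy)
    ((h.differentiableAt_fderiv hy).continuousAt.clm_apply continuousAt_const).continuousWithinAt
    continuousWithinAt_const hleft

theorem bound_nonneg (h : IsCapillaryPotential a c A δ G) (hu : u ∈ unitCap a c) : 0 ≤ A :=
  (norm_nonneg (fderiv ℝ (fderiv ℝ G) u)).trans (h.norm_fderiv_fderiv_le u hu)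

theorem norm_fderiv_sub_fderiv_le (h : IsCapillaryPotential a c A δ G) (ha : ‖a‖ = 1)
    (hc : 0 ≤ c) (hc1 : c < 1) (he : e ∈ unitCap a c) (hx : x ∈ openCone a c)
    (hxe : ‖x - e‖ < 1 / 2) : ‖fderiv ℝ G x - fderiv ℝ G e‖ ≤ 2 * A * ‖x - e‖ := by
  set S := openCone a c ∩ Metric.ball e (1 / 2)
  have hSconvex : Convex ℝ S := (convex_openCone hc).inter (convex_ball e _)
  have hxS : x ∈ S := ⟨hx, mem_ball_iff_norm.2 hxe⟩
  have hbound : ∀ z ∈ S, ‖fderiv ℝ (fderiv ℝ G) z‖ ≤ 2 * A := fun z ⟨hz, hze⟩ ↦ by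
    have hnorm : 2⁻¹ ≤ ‖z‖ := by
      linarith [he.1, norm_le_norm_add_norm_sub' e z, norm_sub_rev e z, mem_ball_iff_norm.1 hze]
    calc ‖fderiv ℝ (fderiv ℝ G) z‖ ≤ ‖z‖⁻¹ * A := h.norm_fderiv_fderiv_le_of_mem_openCone hz
      _ ≤ 2 * A := mul_le_mul_of_nonneg_right (inv_le_of_inv_le₀ two_pos hnorm) (h.bound_nonneg he)
  have hlip : ∀ z ∈ S, ‖fderiv ℝ G x - fderiv ℝ G z‖ ≤ 2 * A * ‖x - z‖ := fun z hz ↦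
    hSconvex.norm_image_sub_le_of_norm_fderiv_le
      (fun z hz ↦ h.differentiableAt_fderiv (openCone_subset_puncturedCone hz.1)) hbound hz hxS
  have heC : e ∈ puncturedCone a c := unitCap_subset_puncturedCone he
  have heS : e ∈ closure S :=
    Metric.isOpen_ball.closure_inter
      ⟨puncturedCone_subset_closure_openCone ha hc hc1 heC, Metric.mem_ball_self (by norm_num)⟩
  exact ContinuousWithinAt.closure_le heS
    (continuousAt_const.sub (h.differentiableAt_fderiv heC).continuousAt).norm.continuousWithinAt
    (by fun_prop) hlip

theorem fderiv_apply_sub_fderiv_apply_le (h : IsCapillaryPotential a c A δ G) (ha : ‖a‖ = 1)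
    (hc : 0 ≤ c) (hc1 : c < 1) (he : e ∈ unitCap a c) (hu : u ∈ unitCap a c)
    (hx : x ∈ openCone a c) (hxe : ‖x - e‖ < 1 / 2) :
    fderiv ℝ G u x - fderiv ℝ G e x ≤ 2 * A * ‖x - e‖ ^ 2 := by
  have hxC : x ∈ puncturedCone a c := openCone_subset_puncturedCone hx
  have heC : e ∈ puncturedCone a c := unitCap_subset_puncturedCone he
  have hxe_tangent := h.fderiv_apply_le ha hc hc1 heC hxC
  have heuler := h.fderiv_apply_self heC
  calc fderiv ℝ G u x - fderiv ℝ G e x ≤ G x - fderiv ℝ G e x :=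
        sub_le_sub_right
          (h.fderiv_apply_le ha hc hc1 hxC (unitCap_subset_puncturedCone hu)) _
    _ = fderiv ℝ G x x - fderiv ℝ G e x := by rw [h.fderiv_apply_self hxC]
    _ ≤ (fderiv ℝ G x - fderiv ℝ G e) (x - e) := by
        simp only [sub_apply, map_sub]
        linarith
    _ ≤ ‖fderiv ℝ G x - fderiv ℝ G e‖ * ‖x - e‖ :=
        (le_abs_self _).trans ((fderiv ℝ G x - fderiv ℝ G e).le_opNorm _)
    _ ≤ 2 * A * ‖x - e‖ * ‖x - e‖ := by
        gcongr
        exact h.norm_fderiv_sub_fderiv_le ha hc hc1 he hx hxe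
    _ = 2 * A * ‖x - e‖ ^ 2 := by ring

theorem exists_le_norm_fderiv_sub (h : IsCapillaryPotential a c A δ G) (ha : ‖a‖ = 1)
    (hc : 0 ≤ c) (hc1 : c < 1) (hδ : 0 < δ) (p : E →L[ℝ] ℝ) :
    ∃ u ∈ unitCap a c, δ * (1 - c) / (8 * finrank ℝ E) ≤ ‖fderiv ℝ G u - p‖ := by
  have hball := closedBall_subset_openCone ha hc hc1
  have hdim : (0 : ℝ) < finrank ℝ E := Nat.cast_pos.2
    (finrank_pos_iff_exists_ne_zero.2 ⟨a, norm_ne_zero_iff.1 (by simp [ha])⟩)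
  have hlap : ∀ x ∈ Metric.closedBall a ((1 - c) / 2),
      finrank ℝ E * (δ / (2 * finrank ℝ E)) < Δ G x := fun x hx ↦ by
    have hxC := openCone_subset_puncturedCone (hball hx)
    have hnorm : ‖x‖ < 2 := by
      linarith [norm_le_norm_add_norm_sub' x a, mem_closedBall_iff_norm.1 hx]
    calc finrank ℝ E * (δ / (2 * finrank ℝ E)) = 2⁻¹ * δ := by field_simp
      _ < ‖x‖⁻¹ * δ := by
        gcongr
        exact norm_pos_iff.2 hxC.1
      _ ≤ Δ G x := h.inv_norm_mul_le_laplacian (hball hx)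
  obtain ⟨x, hx, hle⟩ := exists_mul_le_norm_fderiv_sub (by linarith)
    (fun x hx ↦ h.contDiffAt x (openCone_subset_puncturedCone (hball hx))) hlap p
  have hxC := openCone_subset_puncturedCone (hball hx)
  refine ⟨‖x‖⁻¹ • x, inv_norm_smul_mem_unitCap hxC, ?_⟩
  rw [h.fderiv_smul (inv_pos.2 (norm_pos_iff.2 hxC.1)) (hball hx)]
  exact le_of_eq_of_le (by field_simp; ring) hle

theorem mul_fderiv_sub_apply_le (h : IsCapillaryPotential a c A δ G) (ha : ‖a‖ = 1) (hc : 0 ≤ c)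
    (hc1 : c < 1) (he : e ∈ unitCap a c) (hu : u ∈ unitCap a c) {w : E} (hw : ‖w‖ ≤ 1) {ρ : ℝ}
    (hρ : 0 < ρ) (hρ8 : ρ ≤ 1 / 8) :
    ρ * ((1 - c) / 2) * (fderiv ℝ G u - fderiv ℝ G e) w ≤
      fderiv ℝ G e (e + ρ • a) - fderiv ℝ G u (e + ρ • a) + 8 * A * ρ ^ 2 := by
  set r := (1 - c) / 2 with hr_def
  have hr : 0 < r := by linarith
  have hball : a + r • w ∈ Metric.closedBall a r := by
    simpa [norm_smul, abs_of_pos hr] using mul_le_of_le_one_right hr.le hw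
  set x := e + ρ • (a + r • w) with hx_def
  have hx : x ∈ openCone a c := add_mem_openCone hc (unitCap_subset_puncturedCone he)
    (smul_mem_openCone hρ (closedBall_subset_openCone ha hc hc1 hball))
  have hdist : ‖x - e‖ ≤ 2 * ρ := by
    have hnorm : ‖a + r • w‖ ≤ 2 := by
      linarith [norm_le_norm_add_norm_sub' (a + r • w) a, mem_closedBall_iff_norm.1 hball]
    rw [hx_def, add_sub_cancel_left, norm_smul, Real.norm_of_nonneg hρ.le]
    nlinarith
  have htouch : fderiv ℝ G u x - fderiv ℝ G e x ≤ 8 * A * ρ ^ 2 :=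
    calc fderiv ℝ G u x - fderiv ℝ G e x ≤ 2 * A * ‖x - e‖ ^ 2 :=
          h.fderiv_apply_sub_fderiv_apply_le ha hc hc1 he hu hx (by linarith)
      _ ≤ 2 * A * (2 * ρ) ^ 2 := by
          have hA := h.bound_nonneg he
          gcongr
      _ = 8 * A * ρ ^ 2 := by ring
  have hsplit : ∀ L : E →L[ℝ] ℝ, L x = L (e + ρ • a) + ρ * r * L w := fun L ↦ by
    simp only [hx_def, map_add, map_smul, smul_add, smul_eq_mul]
    ring
  rw [hsplit, hsplit] at htouch
  rw [sub_apply]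
  linarith

/- Choosing `w` to nearly realize the norm of `G'(u) - G'(e)`, the left-hand side of
`mul_fderiv_sub_apply_le` is of order `ρ`, which beats the quadratic error for small `ρ`. -/
theorem exists_uniform_gap (ha : ‖a‖ = 1) (hc : 0 ≤ c) (hc1 : c < 1) (A : ℝ) (hδ : 0 < δ) :
    ∃ ρ ∈ Ioc (0 : ℝ) 1, ∃ ε > 0, ∀ G, IsCapillaryPotential a c A δ G → ∀ e ∈ unitCap a c,
      ∃ u ∈ unitCap a c, ε ≤ fderiv ℝ G e (e + ρ • a) - fderiv ℝ G u (e + ρ • a) := by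
  set r := (1 - c) / 2 with hr_def
  set η := δ * (1 - c) / (8 * finrank ℝ E)
  have hdim : (0 : ℝ) < finrank ℝ E := Nat.cast_pos.2
    (finrank_pos_iff_exists_ne_zero.2 ⟨a, norm_ne_zero_iff.1 (by simp [ha])⟩)
  have hη : 0 < η := div_pos (mul_pos hδ (sub_pos.2 hc1)) (by positivity)
  have hr : 0 < r := by linarith
  set ρ := min (1 / 8) (r * η / (32 * (|A| + 1)))
  have hρ : 0 < ρ := lt_min (by norm_num) (by positivity)
  have hρ8 : ρ ≤ 1 / 8 := min_le_left _ _
  have hρA : ρ * (32 * (|A| + 1)) ≤ r * η := (le_div_iff₀ (by positivity)).1 (min_le_right _ _)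
  refine ⟨ρ, ⟨hρ, by linarith⟩, ρ * r * η / 4, div_pos (mul_pos (mul_pos hρ hr) hη) four_pos,
    fun G h e he ↦ ?_⟩
  obtain ⟨u, hu, hηu⟩ := h.exists_le_norm_fderiv_sub ha hc hc1 hδ (fderiv ℝ G e)
  obtain ⟨w, hw, hwu⟩ := exists_norm_le_one_half_norm_le_apply (fderiv ℝ G u - fderiv ℝ G e)
  have hlower : ρ * r * (η / 2) ≤ ρ * r * (fderiv ℝ G u - fderiv ℝ G e) w := by
    gcongr
    linarith
  have herror : 8 * A * ρ ^ 2 ≤ ρ * r * η / 4 := by nlinarith [le_abs_self A]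
  have hincr := h.mul_fderiv_sub_apply_le ha hc hc1 he hu hw hρ hρ8
  rw [← hr_def] at hincr
  exact ⟨u, hu, by linarith⟩

theorem fderiv_sub_fderiv_apply_self_nonneg (h : IsCapillaryPotential a c A δ G) (ha : ‖a‖ = 1)
    (hc : 0 ≤ c) (hc1 : c < 1) (hx : x ∈ unitCap a c) (hy : y ∈ unitCap a c) :
    0 ≤ fderiv ℝ G x x - fderiv ℝ G y x := by
  have hxC := unitCap_subset_puncturedCone hx
  rw [h.fderiv_apply_self hxC]
  exact sub_nonneg.2 (h.fderiv_apply_le ha hc hc1 hxC (unitCap_subset_puncturedCone hy))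

theorem fderiv_capBoundary_apply_axis (h : IsCapillaryPotential a c A δ G) (ha : ‖a‖ = 1)
    (hc : 0 ≤ c) (hc1 : c < 1) {v : E} (hv : ‖v‖ = 1) (hav : ⟪a, v⟫ = 0) :
    fderiv ℝ G (capBoundary a c v) a = 0 :=
  h.robin _ (capBoundary_mem_unitCap ha hc hc1 hv hav) (inner_capBoundary ha hav)

/- Compare `u` with the boundary point `u₀` of the meridian through `u`: as `√(1 - c²) u` is the sum
of nonnegative multiples of `u₀` and `a`, monotonicity of `G'` passes from `u` and `u₀` to `a`. -/
theorem fderiv_apply_axis_nonneg (h : IsCapillaryPotential a c A δ G) (ha : ‖a‖ = 1) (hc : 0 ≤ c)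
    (hc1 : c < 1) (hE : 2 ≤ finrank ℝ E) (hu : u ∈ unitCap a c) : 0 ≤ fderiv ℝ G u a := by
  rcases hu.2.eq_or_lt with hcu | hcu
  · exact (h.robin u hu hcu.symm).ge
  obtain ⟨v, hv, hav, r, hr, hu_eq⟩ := exists_eq_smul_add_inner_smul hE ha u
  set t := ⟪a, u⟫
  set s := √(1 - c ^ 2) with hs_def
  have hrt : r ^ 2 + t ^ 2 = 1 := by
    rw [← norm_sq_smul_add_smul ha hv hav, ← hu_eq, hu.1, one_pow]
  have hrs : r < s := lt_sqrt_of_sq_lt (by nlinarith)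
  have hcoeff : 0 < s * t - r * c := by nlinarith
  have hmeridian : s • u = r • capBoundary a c v + (s * t - r * c) • a := by
    rw [capBoundary, ← hs_def, hu_eq]
    module
  have hu₀ := capBoundary_mem_unitCap ha hc hc1 hv hav
  have hmono := h.fderiv_sub_fderiv_apply_self_nonneg ha hc hc1 hu hu₀
  have hmono₀ := h.fderiv_sub_fderiv_apply_self_nonneg ha hc hc1 hu₀ hu
  set D := fderiv ℝ G u - fderiv ℝ G (capBoundary a c v) with hD_def
  have hDa : D a = fderiv ℝ G u a := by
    simp [hD_def, h.fderiv_capBoundary_apply_axis ha hc hc1 hv hav]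
  have hD := congrArg D hmeridian
  rw [map_smul, map_add, map_smul, map_smul, hDa, smul_eq_mul, smul_eq_mul, smul_eq_mul] at hD
  have hDu : 0 ≤ D u := hmono
  have hDu₀ : D (capBoundary a c v) ≤ 0 := by
    rw [hD_def, sub_apply]
    linarith
  exact (mul_nonneg_iff_of_pos_left hcoeff).1
    (by linarith [mul_nonneg (hr.trans hrs.le) hDu, mul_nonpos_of_nonneg_of_nonpos hr hDu₀])

theorem fderiv_axis_apply_le_capBoundary (h : IsCapillaryPotential a c A δ G) (ha : ‖a‖ = 1)
    (hc : 0 ≤ c) (hc1 : c < 1) (hE : 2 ≤ finrank ℝ E) {v : E} (hv : ‖v‖ = 1) (hav : ⟪a, v⟫ = 0) :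
    fderiv ℝ G a v ≤ fderiv ℝ G (capBoundary a c v) v := by
  have haC := axis_mem_unitCap ha hc1
  have hmono := h.fderiv_sub_fderiv_apply_self_nonneg ha hc hc1
    (capBoundary_mem_unitCap ha hc hc1 hv hav) haC
  have hrobin := h.fderiv_capBoundary_apply_axis ha hc hc1 hv hav
  have hheight := mul_nonneg hc (h.fderiv_apply_axis_nonneg ha hc hc1 hE haC)
  have hs : 0 < √(1 - c ^ 2) := sqrt_pos.2 (by nlinarith)
  refine le_of_mul_le_mul_left ?_ hs
  simp only [clm_apply_capBoundary, hrobin] at hmono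
  linarith

theorem half_le_fderiv_axis_apply_axis (h : IsCapillaryPotential a c A δ G) (ha : ‖a‖ = 1)
    (hc : 0 ≤ c) (hc1 : c < 1) (hE : 2 ≤ finrank ℝ E) {ρ ε : ℝ} (hρ : ρ ∈ Ioc 0 1)
    (hu : u ∈ unitCap a c) (hgap : ε ≤ fderiv ℝ G a (a + ρ • a) - fderiv ℝ G u (a + ρ • a)) :
    ε / 2 ≤ fderiv ℝ G a a := by
  have hheight := h.fderiv_apply_axis_nonneg ha hc hc1 hE hu
  have hheight_axis := h.fderiv_apply_axis_nonneg ha hc hc1 hE (axis_mem_unitCap ha hc1)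
  simp only [map_add, map_smul, smul_eq_mul] at hgap
  nlinarith [hρ.1, hρ.2]

theorem le_fderiv_capBoundary_sub_apply (h : IsCapillaryPotential a c A δ G) (ha : ‖a‖ = 1)
    (hc : 0 ≤ c) (hc1 : c < 1) (hE : 2 ≤ finrank ℝ E) {v : E} (hv : ‖v‖ = 1) (hav : ⟪a, v⟫ = 0)
    {ρ ε : ℝ} (hρ : 0 < ρ) (hε : 0 < ε) (hu : u ∈ unitCap a c)
    (hgap : ε ≤ fderiv ℝ G (capBoundary a c v) (capBoundary a c v + ρ • a) -
      fderiv ℝ G u (capBoundary a c v + ρ • a)) :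
    ε ≤ fderiv ℝ G (capBoundary a c v) v - fderiv ℝ G u v := by
  have hheight := h.fderiv_apply_axis_nonneg ha hc hc1 hE hu
  have hrobin := h.fderiv_capBoundary_apply_axis ha hc hc1 hv hav
  have hs1 : √(1 - c ^ 2) ≤ 1 := sqrt_le_one.2 (by nlinarith)
  have hs0 := sqrt_nonneg (1 - c ^ 2)
  simp only [map_add, map_smul, smul_eq_mul, clm_apply_capBoundary, hrobin] at hgap
  have hscaled : ε ≤ √(1 - c ^ 2) * (fderiv ℝ G (capBoundary a c v) v - fderiv ℝ G u v) := by
    nlinarith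
  have hpos := pos_of_mul_pos_right (hε.trans_le hscaled) hs0
  exact hscaled.trans (mul_le_of_le_one_left hpos.le hs1)

theorem exists_uniform_width (ha : ‖a‖ = 1) (hc : 0 ≤ c) (hc1 : c < 1) (hE : 2 ≤ finrank ℝ E)
    (A : ℝ) (hδ : 0 < δ) :
    ∃ ε > 0, ∀ G, IsCapillaryPotential a c A δ G → ∀ e, ‖e‖ = 1 →
      ∃ u ∈ unitCap a c, ∃ w ∈ unitCap a c, ε ≤ fderiv ℝ G u e - fderiv ℝ G w e := by
  obtain ⟨ρ, hρ, ε, hε, hgap⟩ := exists_uniform_gap ha hc hc1 A hδ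
  refine ⟨ε / 4, by positivity, fun G h e he ↦ ?_⟩
  wlog hae : ⟪a, e⟫ ≤ 0 generalizing e
  · obtain ⟨u, hu, w, hw, hle⟩ := this (-e) (by rwa [norm_neg])
      (by rw [inner_neg_right]; linarith)
    exact ⟨w, hw, u, hu, by simpa [neg_add_eq_sub] using hle⟩
  obtain ⟨v, hv, hav, r, hr, he_eq⟩ := exists_eq_smul_add_inner_smul hE ha e
  set t := ⟪a, e⟫
  have hrt : r ^ 2 + t ^ 2 = 1 := by
    rw [← norm_sq_smul_add_smul ha hv hav, ← he_eq, he, one_pow]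
  have haC := axis_mem_unitCap ha hc1
  have hu₀ := capBoundary_mem_unitCap ha hc hc1 hv hav
  have hrobin := h.fderiv_capBoundary_apply_axis ha hc hc1 hv hav
  refine ⟨capBoundary a c v, hu₀, ?_⟩
  rcases le_total (1 / 2) r with hr2 | hr2
  · obtain ⟨u, hu, hle⟩ := hgap G h _ hu₀
    have hwidth := h.le_fderiv_capBoundary_sub_apply ha hc hc1 hE hv hav hρ.1 hε hu hle
    have hheight := h.fderiv_apply_axis_nonneg ha hc hc1 hE hu
    refine ⟨u, hu, ?_⟩
    rw [he_eq]
    simp only [map_add, map_smul, smul_eq_mul, hrobin]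
    nlinarith
  · obtain ⟨u, hu, hle⟩ := hgap G h a haC
    have hheight := h.half_le_fderiv_axis_apply_axis ha hc hc1 hE hρ hu hle
    have hmono := h.fderiv_axis_apply_le_capBoundary ha hc hc1 hE hv hav
    have ht : t ≤ -(1 / 2) := by nlinarith
    refine ⟨a, haC, ?_⟩
    rw [he_eq]
    simp only [map_add, map_smul, smul_eq_mul, hrobin]
    nlinarith

theorem exists_volume_lower_bound [MeasurableSpace E] [BorelSpace E] (ha : ‖a‖ = 1) (hc : 0 ≤ c)
    (hc1 : c < 1) (hE : 2 ≤ finrank ℝ E) (A : ℝ) (hδ : 0 < δ) :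
    ∃ c₂ : ℝ, 0 < c₂ ∧ ∀ G, IsCapillaryPotential a c A δ G →
      ENNReal.ofReal c₂ ≤ volume (convexHull ℝ (gradient G '' unitCap a c)) := by
  obtain ⟨ε, hε, hwidth⟩ := exists_uniform_width ha hc hc1 hE A hδ
  have hdim : (0 : ℝ) < finrank ℝ E := Nat.cast_pos.2 (two_pos.trans_le hE)
  refine ⟨((finrank ℝ E : ℝ)⁻¹ * (ε / 2)) ^ finrank ℝ E,
    pow_pos (mul_pos (inv_pos.2 hdim) (half_pos hε)) _, fun G h ↦ ?_⟩
  have hmem : ∀ u ∈ unitCap a c, gradient G u ∈ convexHull ℝ (gradient G '' unitCap a c) :=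
    fun u hu ↦ subset_convexHull ℝ _ (mem_image_of_mem _ hu)
  refine ofReal_pow_finrank_le_volume_of_forall_le_inner_sub (convex_convexHull ℝ _)
    ⟨_, hmem a (axis_mem_unitCap ha hc1)⟩ hε fun e he ↦ ?_
  obtain ⟨u, hu, w, hw, hle⟩ := hwidth G h e he
  refine ⟨_, hmem u hu, _, hmem w hw, ?_⟩
  rwa [real_inner_comm, inner_sub_left, inner_gradient_left, inner_gradient_left]

end IsCapillaryPotential

end CapillaryPotential

section Translation

open Laplacian

variable {n k : ℕ} {m : ℕ∞} {θ A c₀ : ℝ} {s G : V n → ℝ} {u x : V n}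

theorem norm_Etop (n : ℕ) : ‖Etop n‖ = 1 := by simp [Etop]

theorem inner_Etop_left (x : V n) : ⟪Etop n, x⟫ = x (Fin.last n) := by
  simp [Etop, EuclideanSpace.inner_single_left]

theorem unitCap_Etop (n : ℕ) (θ : ℝ) : unitCap (Etop n) (cos θ) = sphCap n θ := by
  simp only [unitCap, sphCap, inner_Etop_left]

theorem exists_eq_smul_of_mem_puncturedCone_Etop (hx : x ∈ puncturedCone (Etop n) (cos θ)) :
    ∃ l : ℝ, 0 < l ∧ ∃ u ∈ sphCap n θ, x = l • u :=
  ⟨‖x‖, norm_pos_iff.2 hx.1, ‖x‖⁻¹ • x, unitCap_Etop n θ ▸ inv_norm_smul_mem_unitCap hx,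
    (smul_inv_smul₀ (norm_ne_zero_iff.2 hx.1) x).symm⟩

theorem sub_smul_Etop_mem_capCap (hu : u ∈ sphCap n θ) : u - cos θ • Etop n ∈ capCap n θ := by
  refine ⟨?_, by rw [sub_add_cancel, hu.1]⟩
  rw [← inner_Etop_left, inner_sub_right, real_inner_smul_right, real_inner_self_eq_norm_sq,
    norm_Etop, inner_Etop_left]
  linarith [hu.2]

theorem posSemidef_hessM (hG : ContDiffAt ℝ 2 G u) (hpos : ∀ v, 0 ≤ hessQ n G u v v) :
    (hessM n G u).PosSemidef := by
  refine Matrix.PosSemidef.of_dotProduct_mulVec_nonneg ?_ fun x ↦ ?_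
  · ext i j
    exact hG.isSymmSndFDerivAt (by simp) _ _
  · have h := hpos (∑ i, x i • EuclideanSpace.single i 1)
    simp only [hessQ, map_sum, map_smul, FunLike.coe_sum, FunLike.coe_smul, Finset.sum_apply,
      Pi.smul_apply, smul_eq_mul, Finset.mul_sum] at h
    rw [Finset.sum_comm] at h
    simpa [dotProduct, Matrix.mulVec, hessM, Finset.mul_sum, mul_comm, mul_left_comm] using h

theorem laplacian_eq_trace_hessM (G : V n → ℝ) (u : V n) :
    Δ G u = (hessM n G u).trace := by
  simp [laplacian_eq_sum_fderiv_fderiv (EuclideanSpace.basisFun (Fin (n + 1)) ℝ), Matrix.trace,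
    hessM]

theorem min_one_le_laplacian (hk : k ≠ 0) (hkn : k ≤ n + 1) (hG : ContDiffAt ℝ 2 G u)
    (hpos : ∀ v, 0 ≤ hessQ n G u v v) (hσ : c₀ ≤ sigmaElem n k G u) :
    min 1 c₀ ≤ Δ G u := by
  have hM := posSemidef_hessM hG hpos
  rw [laplacian_eq_trace_hessM]
  refine min_one_le_of_le_pow hk hM.trace_nonneg (hσ.trans ?_)
  simpa [sigmaElem] using neg_one_pow_mul_charpoly_coeff_le_trace_pow hM (k := k) (by simpa)

theorem IsHomExt.isCapillaryPotential (hext : IsHomExt n θ m s G) (hm : 2 ≤ m)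
    (hcap : IsCapillaryF n θ G) (hτ : TauNonneg n θ G)
    (hA : ∀ u ∈ sphCap n θ, ‖fderiv ℝ (fderiv ℝ G) u‖ ≤ A) (hk : k ≠ 0) (hkn : k ≤ n + 1)
    (hσ : ∀ ζ ∈ capCap n θ, c₀ ≤ sigmaElem n k G (ζ + cos θ • Etop n)) :
    IsCapillaryPotential (Etop n) (cos θ) A (min 1 c₀) G := by
  obtain ⟨⟨U, hU, hcone, hsmooth⟩, hhom, -⟩ := hext
  have hC2 : ∀ x ∈ puncturedCone (Etop n) (cos θ), ContDiffAt ℝ 2 G x := fun x hx ↦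
    (hsmooth.contDiffAt (hU.mem_nhds (hcone (exists_eq_smul_of_mem_puncturedCone_Etop hx)))).of_le
      (WithTop.coe_le_coe.2 hm)
  refine ⟨hC2, fun l hl x hx ↦ ?_, fun u hu hbdry ↦ ?_, ?_, ?_, ?_⟩
  · obtain ⟨r, hr, u, hu, rfl⟩ := exists_eq_smul_of_mem_puncturedCone_Etop hx
    rw [smul_smul, hhom _ (mul_pos hl hr) u hu, hhom r hr u hu, mul_assoc]
  · exact hcap u ⟨hu.1, by rw [← inner_Etop_left, hbdry]⟩
  · exact unitCap_Etop n θ ▸ hτ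
  · exact unitCap_Etop n θ ▸ hA
  · intro u hu
    have hu' : u ∈ sphCap n θ := unitCap_Etop n θ ▸ hu
    refine min_one_le_laplacian hk hkn (hC2 u (unitCap_subset_puncturedCone hu)) (hτ u hu') ?_
    simpa using hσ _ (sub_smul_Etop_mem_capCap hu')

end Translation

theorem capillary_volume_lower_bound_general {n k : ℕ} {θ : ℝ}
    (hθ : θ ∈ Ioc 0 (π / 2)) (hk : 1 ≤ k) (hkn : k ≤ n) (A : ℝ) {c₀ : ℝ} (hc₀ : 0 < c₀) :
    ∃ c₂ : ℝ, 0 < c₂ ∧ ∀ (m : ℕ∞) (s G : V n → ℝ), 2 ≤ m → IsHomExt n θ m s G →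
      IsCapillaryF n θ G → TauNonneg n θ G →
      (∀ u ∈ sphCap n θ, ‖fderiv ℝ (fderiv ℝ G) u‖ ≤ A) →
      (∀ ζ ∈ capCap n θ, c₀ ≤ sigmaElem n k G (ζ + cos θ • Etop n)) →
      ENNReal.ofReal c₂ ≤ volume (convexHull ℝ (gradient G '' sphCap n θ)) := by
  have hc : 0 ≤ cos θ := cos_nonneg_of_mem_Icc ⟨by linarith [hθ.1, pi_pos], hθ.2⟩
  have hc1 : cos θ < 1 := by
    simpa using cos_lt_cos_of_nonneg_of_le_pi_div_two le_rfl hθ.2 hθ.1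
  obtain ⟨c₂, hc₂, hvol⟩ := IsCapillaryPotential.exists_volume_lower_bound (norm_Etop n) hc hc1
    (by simpa using hk.trans hkn) A (lt_min one_pos hc₀)
  refine ⟨c₂, hc₂, fun m s G hm hext hcap hτ hA hσ ↦ ?_⟩
  rw [← unitCap_Etop]
  exact hvol G (hext.isCapillaryPotential hm hcap hτ hA (Nat.one_le_iff_ne_zero.1 hk)
    (hkn.trans n.le_succ) hσ)

/-- uniform lower volume bound. -/
theorem capillary_volume_lower_bound (n k : ℕ) (hn : 1 ≤ n) (θ : ℝ)
    (hθ : θ ∈ Ioc 0 (π / 2)) (hk : 1 ≤ k) (hkn : k ≤ n)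
    (A c₀ c₁ : ℝ) (hA : 0 < A) (hc₀ : 0 < c₀) (hc₁ : 0 < c₁)
    (s G : ℕ → V n → ℝ)
    (hext : ∀ i, IsHomExt n θ ⊤ (s i) (G i))
    (hcap : ∀ i, IsCapillaryF n θ (G i))
    (hτ : ∀ i, TauPos n θ (G i))
    (hC2 : ∀ i, ∀ u ∈ sphCap n θ,
      |G i u| + ‖fderiv ℝ (G i) u‖ + ‖fderiv ℝ (fderiv ℝ (G i)) u‖ ≤ A)
    (hint : ∀ i, ∀ j : Fin (n + 1), j ≠ Fin.last n →
      ∫ ζ in capCap n θ, s i ζ * ζ j ∂μH[(n : ℝ)] = 0)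
    (hσ : ∀ i, ∀ ζ ∈ capCap n θ,
      c₀ ≤ sigmaElem n k (G i) (ζ + Real.cos θ • Etop n))
    (hbase : ∀ i, c₁ ≤ sSup {r : ℝ |
      ∃ x ∈ convexHull ℝ (gradient (G i) '' sphCap n θ) ∩
        {y : V n | y (Fin.last n) = 0},
      ∃ v : V n, ‖v‖ = 1 ∧ v (Fin.last n) = 0 ∧ ⟪v, x⟫ = r}) :
    ∃ c₂ : ℝ, 0 < c₂ ∧ ∀ i,
      ENNReal.ofReal c₂ ≤ volume (convexHull ℝ (gradient (G i) '' sphCap n θ)) := by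
  obtain ⟨c₂, hc₂, hvol⟩ := capillary_volume_lower_bound_general hθ hk hkn A hc₀
  refine ⟨c₂, hc₂, fun i ↦ hvol ⊤ (s i) (G i) le_top (hext i) (hcap i) (hτ i).1
    (fun u hu ↦ ?_) (hσ i)⟩
  exact (le_add_of_nonneg_left (by positivity)).trans (hC2 i u hu)
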